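/- arXiv:1411.7996 — 2 statements merged into one kernel-verified Lean document; each statement's English description precedes it below -/
import Mathlib

section
/- Let n ≥ 3 be an integer and let B(x,R) ⊂ ℝⁿ be an open ball. Let c ≥ 0, let f be a smooth nonnegative function on an open set containing the closed ball B̄(x,R) satisfying −Δf ≤ c·f pointwise on B(x,R), and let φ be a smooth function with compact support contained in B(x,R). Then ∫_{B(x,R)} ‖∇(φf)‖² dx ≤ ∫_{B(x,R)} (‖∇φ‖² + c·φ²) f² dx. -/
open MeasureTheory Metric

/-- The Euclidean (analyst's) Laplacian `Δf = ∑ i ∂²f/∂xᵢ²`. -/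
noncomputable def lap {n : ℕ} (f : EuclideanSpace ℝ (Fin n) → ℝ)
    (x : EuclideanSpace ℝ (Fin n)) : ℝ :=
  ∑ i : Fin n,
    fderiv ℝ (fun y => fderiv ℝ f y (EuclideanSpace.single i 1)) x (EuclideanSpace.single i 1)

/-!
Expanding the square gives `‖∇(φf)‖² = ‖∇φ‖² f² + ⟪∇(φ²f), ∇f⟫`. Since `φ²f` is a nonnegative
test function, Green's identity `∫ ⟪∇ψ, ∇f⟫ = -∫ ψ Δf` with `ψ = φ²f` and `-Δf ≤ c f` bound the
integral of the last term by `∫ c φ² f²`.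
-/

open scoped Gradient InnerProductSpace Laplacian

section TopologicalSupport

variable {X : Type*} [TopologicalSpace X] [T2Space X] [MeasurableSpace X] [OpensMeasurableSpace X]
  {μ : Measure X} [IsFiniteMeasureOnCompacts μ]

lemma integrable_of_continuousOn_of_eq_zero_of_notMem {F : Type*} [NormedAddCommGroup F]
    {K : Set X} {g : X → F} (hK : IsCompact K) (hg : ContinuousOn g K)
    (hg0 : ∀ x ∉ K, g x = 0) : Integrable g μ :=
  (hg.integrableOn_compact hK).integrable_of_forall_notMem_eq_zero hg0

lemma integrable_mul_of_continuousOn_of_tsupport_subset {Ω : Set X} {ψ g : X → ℝ}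
    (hψ : Continuous ψ) (hψc : HasCompactSupport ψ) (hψΩ : tsupport ψ ⊆ Ω)
    (hg : ContinuousOn g Ω) : Integrable (fun x => ψ x * g x) μ :=
  integrable_of_continuousOn_of_eq_zero_of_notMem hψc (hψ.continuousOn.mul (hg.mono hψΩ))
    fun x hx => by rw [image_eq_zero_of_notMem_tsupport hx, zero_mul]

lemma contDiff_mul_of_contDiffOn_of_tsupport_subset {E : Type*} [NormedAddCommGroup E]
    [NormedSpace ℝ E] {k : WithTop ℕ∞} {Ω : Set E} {ψ g : E → ℝ} (hΩ : IsOpen Ω)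
    (hψ : ContDiff ℝ k ψ) (hψΩ : tsupport ψ ⊆ Ω) (hg : ContDiffOn ℝ k g Ω) :
    ContDiff ℝ k fun x => ψ x * g x :=
  contMDiff_iff_contDiff.1 <| contMDiff_of_tsupport fun _ hx =>
    (hψ.contDiffAt.mul <| hg.contDiffAt <| hΩ.mem_nhds <|
      hψΩ <| tsupport_mul_subset_left hx).contMDiffAt

end TopologicalSupport

section Gradient

variable {E : Type*} [NormedAddCommGroup E] [InnerProductSpace ℝ E] [CompleteSpace E]

lemma gradient_of_notMem_tsupport {f : E → ℝ} {x : E} (hx : x ∉ tsupport f) : ∇ f x = 0 := by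
  rw [gradient, fderiv_of_notMem_tsupport ℝ hx, map_zero]

lemma continuousOn_gradient_of_isOpen {f : E → ℝ} {Ω : Set E} (hΩ : IsOpen Ω)
    (hf : ContDiffOn ℝ 1 f Ω) : ContinuousOn (∇ f) Ω :=
  (InnerProductSpace.toDual ℝ E).symm.continuous.comp_continuousOn
    (hf.continuousOn_fderiv_of_isOpen hΩ le_rfl)

lemma gradient_fun_mul {f g : E → ℝ} {x : E} (hf : DifferentiableAt ℝ f x)
    (hg : DifferentiableAt ℝ g x) :
    ∇ (fun z => f z * g z) x = f x • ∇ g x + g x • ∇ f x := by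
  simp only [gradient, fderiv_fun_mul hf hg, map_add, map_smulₛₗ, conj_trivial]

lemma norm_gradient_mul_sq {φ f : E → ℝ} {x : E} (hφ : DifferentiableAt ℝ φ x)
    (hf : DifferentiableAt ℝ f x) :
    ‖∇ (fun z => φ z * f z) x‖ ^ 2 =
      ‖∇ φ x‖ ^ 2 * f x ^ 2 + ⟪∇ (fun z => φ z * (φ z * f z)) x, ∇ f x⟫_ℝ := by
  rw [gradient_fun_mul hφ (hφ.fun_mul hf), gradient_fun_mul hφ hf]
  simp only [← real_inner_self_eq_norm_sq, inner_add_left, inner_add_right, real_inner_smul_left,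
    real_inner_smul_right, real_inner_comm (∇ φ x)]
  ring

variable [MeasurableSpace E] [OpensMeasurableSpace E] {μ : Measure E}
  [IsFiniteMeasureOnCompacts μ] {Ω : Set E}

lemma integrable_norm_gradient_sq_mul {φ g : E → ℝ} (hφ : ContDiff ℝ 1 φ)
    (hφc : HasCompactSupport φ) (hφΩ : tsupport φ ⊆ Ω) (hg : ContinuousOn g Ω) :
    Integrable (fun x => ‖∇ φ x‖ ^ 2 * g x) μ :=
  integrable_of_continuousOn_of_eq_zero_of_notMem hφc
    (((continuousOn_gradient_of_isOpen isOpen_univ hφ.contDiffOn).mono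
      (Set.subset_univ _)).norm.pow 2 |>.mul (hg.mono hφΩ))
    fun x hx => by simp [gradient_of_notMem_tsupport hx]

lemma integrable_inner_gradient {ψ f : E → ℝ} (hΩ : IsOpen Ω) (hf : ContDiffOn ℝ 1 f Ω)
    (hψ : ContDiff ℝ 1 ψ) (hψc : HasCompactSupport ψ) (hψΩ : tsupport ψ ⊆ Ω) :
    Integrable (fun x => ⟪∇ ψ x, ∇ f x⟫_ℝ) μ :=
  integrable_of_continuousOn_of_eq_zero_of_notMem hψc
    (((continuousOn_gradient_of_isOpen hΩ hψ.contDiffOn).inner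
      (continuousOn_gradient_of_isOpen hΩ hf)).mono hψΩ)
    fun x hx => by rw [gradient_of_notMem_tsupport hx, inner_zero_left]

lemma setIntegral_norm_gradient_mul_sq {φ f : E → ℝ} (hΩ : IsOpen Ω)
    (hf : ContDiffOn ℝ 1 f Ω) (hφ : ContDiff ℝ 1 φ) (hφc : HasCompactSupport φ)
    (hφΩ : tsupport φ ⊆ Ω) :
    ∫ x in Ω, ‖∇ (fun z => φ z * f z) x‖ ^ 2 ∂μ =
      ∫ x in Ω, ‖∇ φ x‖ ^ 2 * f x ^ 2 ∂μ +
        ∫ x in Ω, ⟪∇ (fun z => φ z * (φ z * f z)) x, ∇ f x⟫_ℝ ∂μ := by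
  have hφφf : ContDiff ℝ 1 fun z => φ z * (φ z * f z) :=
    contDiff_mul_of_contDiffOn_of_tsupport_subset hΩ hφ hφΩ (hφ.contDiffOn.mul hf)
  have hf_sq : ContinuousOn (fun x => f x ^ 2) Ω := hf.continuousOn.pow 2
  rw [← integral_add (integrable_norm_gradient_sq_mul hφ hφc hφΩ hf_sq).integrableOn
    (integrable_inner_gradient hΩ hf hφφf hφc.mul_right
      (tsupport_mul_subset_left.trans hφΩ)).integrableOn]
  exact setIntegral_congr_fun hΩ.measurableSet fun x hx => norm_gradient_mul_sq
    (hφ.differentiable one_ne_zero x)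
    ((hf.contDiffAt (hΩ.mem_nhds hx)).differentiableAt one_ne_zero)

end Gradient

section Laplacian

variable {E : Type*} [NormedAddCommGroup E] [InnerProductSpace ℝ E] [FiniteDimensional ℝ E]

lemma inner_gradient_eq_sum_fderiv {ι : Type*} [Fintype ι] (b : OrthonormalBasis ι ℝ E)
    (f g : E → ℝ) (x : E) :
    ⟪∇ f x, ∇ g x⟫_ℝ = ∑ i, fderiv ℝ f x (b i) * fderiv ℝ g x (b i) := by
  rw [← b.sum_inner_mul_inner]
  simp only [inner_gradient_left, inner_gradient_right, conj_trivial]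

variable {F : Type*} [NormedAddCommGroup F] [NormedSpace ℝ F]

lemma laplacian_eq_sum_fderiv_fderiv {ι : Type*} [Fintype ι] (b : OrthonormalBasis ι ℝ E)
    {f : E → F} {x : E} (hf : ContDiffAt ℝ 2 f x) :
    Δ f x = ∑ i, fderiv ℝ (fun y => fderiv ℝ f y (b i)) x (b i) := by
  have hf' : DifferentiableAt ℝ (fderiv ℝ f) x :=
    (hf.fderiv_right (m := 1) le_rfl).differentiableAt one_ne_zero
  simp [InnerProductSpace.laplacian_eq_iteratedFDeriv_orthonormalBasis f b,
    iteratedFDeriv_two_apply, fderiv_clm_apply hf' (differentiableAt_const _)]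

lemma lap_eq_laplacian {n : ℕ} {f : EuclideanSpace ℝ (Fin n) → ℝ}
    {x : EuclideanSpace ℝ (Fin n)} (hf : ContDiffAt ℝ 2 f x) : lap f x = Δ f x := by
  simp [lap, laplacian_eq_sum_fderiv_fderiv (EuclideanSpace.basisFun (Fin n) ℝ) hf]

lemma continuousOn_laplacian_of_isOpen {f : E → F} {Ω : Set E} (hΩ : IsOpen Ω)
    (hf : ContDiffOn ℝ 2 f Ω) : ContinuousOn (Δ f) Ω := by
  rw [InnerProductSpace.laplacian_eq_iteratedFDeriv_stdOrthonormalBasis]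
  have hf'' : ContinuousOn (iteratedFDeriv ℝ 2 f) Ω :=
    ContinuousOn.continuousOn_iteratedFDeriv hf hΩ le_rfl
  exact continuousOn_finsetSum _ fun i _ =>
    (ContinuousMultilinearMap.apply ℝ (fun _ : Fin 2 => E) F _).continuous.comp_continuousOn hf''

end Laplacian

section Integration

lemma setIntegral_mul_fderiv_eq_neg_fderiv_mul {E : Type*} [NormedAddCommGroup E]
    [NormedSpace ℝ E] [FiniteDimensional ℝ E] [MeasurableSpace E] [BorelSpace E] {μ : Measure E}
    [μ.IsAddHaarMeasure] {Ω : Set E} {ψ g : E → ℝ} (hΩ : IsOpen Ω) (hg : ContDiffOn ℝ 1 g Ω)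
    (hψ : ContDiff ℝ 1 ψ) (hψc : HasCompactSupport ψ) (hψΩ : tsupport ψ ⊆ Ω) (v : E) :
    ∫ x in Ω, ψ x * fderiv ℝ g x v ∂μ = -∫ x in Ω, fderiv ℝ ψ x v * g x ∂μ := by
  have hψ' : Continuous fun x => fderiv ℝ ψ x v :=
    (hψ.continuous_fderiv one_ne_zero).clm_apply continuous_const
  have hg' : ContinuousOn (fun x => fderiv ℝ g x v) Ω :=
    (hg.continuousOn_fderiv_of_isOpen hΩ le_rfl).clm_apply continuousOn_const
  have hψ0 : ∀ x ∉ Ω, ψ x = 0 := fun x hx =>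
    image_eq_zero_of_notMem_tsupport fun h => hx (hψΩ h)
  have hψ'0 : ∀ x ∉ Ω, fderiv ℝ ψ x = 0 := fun x hx =>
    fderiv_of_notMem_tsupport ℝ fun h => hx (hψΩ h)
  rw [setIntegral_eq_integral_of_forall_compl_eq_zero fun x hx => by simp [hψ0 x hx],
    setIntegral_eq_integral_of_forall_compl_eq_zero fun x hx => by simp [hψ'0 x hx]]
  apply integral_mul_fderiv_eq_neg_fderiv_mul_of_integrable
  · exact integrable_mul_of_continuousOn_of_tsupport_subset hψ' (hψc.fderiv_apply ℝ v)
      ((tsupport_fderiv_apply_subset ℝ v).trans hψΩ) hg.continuousOn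
  · exact integrable_mul_of_continuousOn_of_tsupport_subset hψ.continuous hψc hψΩ hg'
  · exact integrable_mul_of_continuousOn_of_tsupport_subset hψ.continuous hψc hψΩ hg.continuousOn
  · exact fun x _ => hψ.differentiable one_ne_zero x
  · exact fun x hx => (hg.contDiffAt (hΩ.mem_nhds (hψΩ hx))).differentiableAt one_ne_zero

variable {E : Type*} [NormedAddCommGroup E] [InnerProductSpace ℝ E] [FiniteDimensional ℝ E]
  [MeasurableSpace E] [BorelSpace E] {μ : Measure E} [μ.IsAddHaarMeasure] {Ω : Set E} {ψ : E → ℝ}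

lemma setIntegral_inner_gradient_eq_neg_mul_laplacian {f : E → ℝ} (hΩ : IsOpen Ω)
    (hf : ContDiffOn ℝ 2 f Ω) (hψ : ContDiff ℝ 1 ψ) (hψc : HasCompactSupport ψ)
    (hψΩ : tsupport ψ ⊆ Ω) :
    ∫ x in Ω, ⟪∇ ψ x, ∇ f x⟫_ℝ ∂μ = -∫ x in Ω, ψ x * Δ f x ∂μ := by
  let b := stdOrthonormalBasis ℝ E
  have hψ' : ∀ i, Continuous fun x => fderiv ℝ ψ x (b i) := fun i =>
    (hψ.continuous_fderiv one_ne_zero).clm_apply continuous_const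
  have hf' : ∀ i, ContDiffOn ℝ 1 (fun x => fderiv ℝ f x (b i)) Ω := fun i =>
    (hf.fderiv_of_isOpen hΩ le_rfl).clm_apply contDiffOn_const
  have hf'' : ∀ i, ContinuousOn (fun x => fderiv ℝ (fun y => fderiv ℝ f y (b i)) x (b i)) Ω :=
    fun i => ((hf' i).continuousOn_fderiv_of_isOpen hΩ le_rfl).clm_apply continuousOn_const
  calc ∫ x in Ω, ⟪∇ ψ x, ∇ f x⟫_ℝ ∂μ
      = ∑ i, ∫ x in Ω, fderiv ℝ ψ x (b i) * fderiv ℝ f x (b i) ∂μ := by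
        simp_rw [inner_gradient_eq_sum_fderiv b]
        refine integral_finsetSum _ fun i _ => Integrable.integrableOn ?_
        exact integrable_mul_of_continuousOn_of_tsupport_subset (hψ' i)
          (hψc.fderiv_apply ℝ _) ((tsupport_fderiv_apply_subset ℝ _).trans hψΩ)
          (hf' i).continuousOn
    _ = -∑ i, ∫ x in Ω, ψ x * fderiv ℝ (fun y => fderiv ℝ f y (b i)) x (b i) ∂μ := by
        simp_rw [setIntegral_mul_fderiv_eq_neg_fderiv_mul hΩ (hf' _) hψ hψc hψΩ,
          Finset.sum_neg_distrib, neg_neg]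
    _ = -∫ x in Ω, ∑ i, ψ x * fderiv ℝ (fun y => fderiv ℝ f y (b i)) x (b i) ∂μ := by
        rw [integral_finsetSum _ fun i _ => (integrable_mul_of_continuousOn_of_tsupport_subset
          hψ.continuous hψc hψΩ (hf'' i)).integrableOn]
    _ = -∫ x in Ω, ψ x * Δ f x ∂μ := by
        congr 1
        refine setIntegral_congr_fun hΩ.measurableSet fun x hx => ?_
        simp_rw [← Finset.mul_sum,
          laplacian_eq_sum_fderiv_fderiv b (hf.contDiffAt (hΩ.mem_nhds hx))]

lemma setIntegral_inner_gradient_le_of_neg_laplacian_le {f g : E → ℝ} (hΩ : IsOpen Ω)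
    (hf : ContDiffOn ℝ 2 f Ω) (hg : ContinuousOn g Ω) (hfg : ∀ x ∈ Ω, -Δ f x ≤ g x)
    (hψ : ContDiff ℝ 1 ψ) (hψc : HasCompactSupport ψ) (hψΩ : tsupport ψ ⊆ Ω)
    (hψ0 : ∀ x ∈ Ω, 0 ≤ ψ x) :
    ∫ x in Ω, ⟪∇ ψ x, ∇ f x⟫_ℝ ∂μ ≤ ∫ x in Ω, ψ x * g x ∂μ := by
  have hint : ∀ {h : E → ℝ}, ContinuousOn h Ω → IntegrableOn (fun x => ψ x * h x) Ω μ := fun hh =>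
    (integrable_mul_of_continuousOn_of_tsupport_subset hψ.continuous hψc hψΩ hh).integrableOn
  rw [setIntegral_inner_gradient_eq_neg_mul_laplacian hΩ hf hψ hψc hψΩ, ← integral_neg]
  refine setIntegral_mono_on (hint (continuousOn_laplacian_of_isOpen hΩ hf)).neg (hint hg)
    hΩ.measurableSet fun x hx => ?_
  rw [← mul_neg]
  exact mul_le_mul_of_nonneg_left (hfg x hx) (hψ0 x hx)

theorem caccioppoli_estimate_general {c f φ : E → ℝ} (hΩ : IsOpen Ω) (hc : ContinuousOn c Ω)
    (hf : ContDiffOn ℝ 2 f Ω) (hf0 : ∀ x ∈ Ω, 0 ≤ f x) (hsub : ∀ x ∈ Ω, -Δ f x ≤ c x * f x)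
    (hφ : ContDiff ℝ 1 φ) (hφc : HasCompactSupport φ) (hφΩ : tsupport φ ⊆ Ω) :
    ∫ x in Ω, ‖∇ (fun z => φ z * f z) x‖ ^ 2 ∂μ
      ≤ ∫ x in Ω, (‖∇ φ x‖ ^ 2 + c x * φ x ^ 2) * f x ^ 2 ∂μ := by
  let ψ : E → ℝ := fun x => φ x * (φ x * f x)
  have hf₁ : ContDiffOn ℝ 1 f Ω := hf.of_le one_le_two
  have hψ : ContDiff ℝ 1 ψ :=
    contDiff_mul_of_contDiffOn_of_tsupport_subset hΩ hφ hφΩ (hφ.contDiffOn.mul hf₁)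
  have hψc : HasCompactSupport ψ := hφc.mul_right
  have hψΩ : tsupport ψ ⊆ Ω := tsupport_mul_subset_left.trans hφΩ
  have hψ0 : ∀ x ∈ Ω, 0 ≤ ψ x := fun x hx => by
    simpa only [ψ, ← mul_assoc] using mul_nonneg (mul_self_nonneg (φ x)) (hf0 x hx)
  have hcf : ContinuousOn (fun x => c x * f x) Ω := hc.mul hf.continuousOn
  calc ∫ x in Ω, ‖∇ (fun z => φ z * f z) x‖ ^ 2 ∂μ
      = ∫ x in Ω, ‖∇ φ x‖ ^ 2 * f x ^ 2 ∂μ + ∫ x in Ω, ⟪∇ ψ x, ∇ f x⟫_ℝ ∂μ :=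
        setIntegral_norm_gradient_mul_sq hΩ hf₁ hφ hφc hφΩ
    _ ≤ ∫ x in Ω, ‖∇ φ x‖ ^ 2 * f x ^ 2 ∂μ + ∫ x in Ω, ψ x * (c x * f x) ∂μ := by
        grw [setIntegral_inner_gradient_le_of_neg_laplacian_le hΩ hf hcf hsub hψ hψc hψΩ hψ0]
    _ = ∫ x in Ω, (‖∇ φ x‖ ^ 2 * f x ^ 2 + ψ x * (c x * f x)) ∂μ :=
        (integral_add
          (integrable_norm_gradient_sq_mul hφ hφc hφΩ (hf.continuousOn.pow 2)).integrableOn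
          (integrable_mul_of_continuousOn_of_tsupport_subset
            hψ.continuous hψc hψΩ hcf).integrableOn).symm
    _ = ∫ x in Ω, (‖∇ φ x‖ ^ 2 + c x * φ x ^ 2) * f x ^ 2 ∂μ := by
        congr 1 with x
        ring

end Integration

/-- Caccioppoli-type estimate for a nonnegative subsolution of `-Δf ≤ c f` on a ball:
for any smooth `φ` compactly supported in the ball,
`∫ ‖∇(φf)‖² ≤ ∫ (‖∇φ‖² + c φ²) f²`. -/
theorem caccioppoli_estimate (n : ℕ) (hn : 3 ≤ n)
    (x : EuclideanSpace ℝ (Fin n)) (R : ℝ) (hR : 0 < R)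
    (c : ℝ) (hc : 0 ≤ c)
    (f : EuclideanSpace ℝ (Fin n) → ℝ)
    (U : Set (EuclideanSpace ℝ (Fin n))) (hU : IsOpen U)
    (hBU : closedBall x R ⊆ U)
    (hf : ContDiffOn ℝ (⊤ : ℕ∞) f U)
    (hf0 : ∀ y ∈ U, 0 ≤ f y)
    (hsub : ∀ y ∈ ball x R, -lap f y ≤ c * f y)
    (φ : EuclideanSpace ℝ (Fin n) → ℝ)
    (hφ : ContDiff ℝ (⊤ : ℕ∞) φ) (hφc : HasCompactSupport φ)
    (hφsupp : tsupport φ ⊆ ball x R) :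
    ∫ y in ball x R, ‖gradient (fun z => φ z * f z) y‖ ^ 2
      ≤ ∫ y in ball x R, (‖gradient φ y‖ ^ 2 + c * φ y ^ 2) * f y ^ 2 := by
  have hBU' : ball x R ⊆ U := ball_subset_closedBall.trans hBU
  have hf₂ : ContDiffOn ℝ 2 f (ball x R) := (hf.mono hBU').of_le (WithTop.coe_le_coe.2 le_top)
  refine caccioppoli_estimate_general isOpen_ball continuousOn_const hf₂
    (fun y hy => hf0 y (hBU' hy)) (fun y hy => ?_) (hφ.of_le (mod_cast le_top)) hφc hφsupp
  rw [← lap_eq_laplacian (hf₂.contDiffAt (isOpen_ball.mem_nhds hy))]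
  exact hsub y hy
end

section
/- Let n ≥ 3 be an integer and let p be a real number with 2 < p < 2n/(n−2). Define the quadratic polynomial Q(α) = (α−1)(1+α(p−2)) + α(p−1)·n/(n+2) − α²·(p−1)²(n−1)²/(n+2)². Then the discriminant of Q equals 4n(p−1)(2n−(n−2)p)/(n+2)², which is strictly positive; consequently there exists α ∈ ℝ with Q(α) > 0. -/
/-!
The discriminant of `Q` factors so that its sign is that of `2n - (n-2)p`, which is positive exactly
below the critical Sobolev exponent. A quadratic with positive discriminant takes positive values
whatever the sign of its leading coefficient: a nowhere positive one has discriminant at most `0`.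
-/

section Field

variable {K : Type*} [Field K]

/-- The quadratic `Q(α) = C(α) - β²` of Bakry's argument, for dimension `n` and exponent `p`. The
dimension is a scalar, as in the curvature-dimension condition, and need not be an integer. -/
def bakryQuadratic (n p α : K) : K :=
  (α - 1) * (1 + α * (p - 2)) + α * (p - 1) * n / (n + 2)
    - α ^ 2 * (p - 1) ^ 2 * (n - 1) ^ 2 / (n + 2) ^ 2

/-- The coefficient of `α ^ 2` in `bakryQuadratic n p α`. -/
def bakryLeadingCoeff (n p : K) : K :=
  (p - 2) - (p - 1) ^ 2 * (n - 1) ^ 2 / (n + 2) ^ 2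

/-- The coefficient of `α` in `bakryQuadratic n p α`. -/
def bakryLinearCoeff (n p : K) : K :=
  (3 - p) + (p - 1) * n / (n + 2)

theorem bakryQuadratic_eq (n p α : K) :
    bakryQuadratic n p α = bakryLeadingCoeff n p * α ^ 2 + bakryLinearCoeff n p * α + -1 := by
  unfold bakryQuadratic bakryLeadingCoeff bakryLinearCoeff
  ring

theorem discrim_bakryQuadratic {n : K} (hn : n + 2 ≠ 0) (p : K) :
    discrim (bakryLeadingCoeff n p) (bakryLinearCoeff n p) (-1)
      = 4 * n * (p - 1) * (2 * n - (n - 2) * p) / (n + 2) ^ 2 := by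
  unfold discrim bakryLeadingCoeff bakryLinearCoeff
  field_simp
  ring

end Field

section LinearOrderedField

variable {K : Type*} [Field K] [LinearOrder K] [IsStrictOrderedRing K]

theorem exists_quadratic_pos_of_discrim_pos {a b c : K} (h : 0 < discrim a b c) :
    ∃ x, 0 < a * x ^ 2 + b * x + c := by
  by_contra! hnonpos
  exact h.not_ge (discrim_le_zero_of_nonpos fun x => by simpa only [sq] using hnonpos x)

-- `hnp` is `p < 2n/(n-2)` cleared of its denominator, so that it keeps its meaning for `n ≤ 2`,
-- where the critical exponent is infinite and `2n/(n-2)` is negative or the junk value `0`.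
theorem discrim_bakryQuadratic_pos {n p : K} (hn : 0 < n) (hp : 1 < p)
    (hnp : (n - 2) * p < 2 * n) :
    0 < discrim (bakryLeadingCoeff n p) (bakryLinearCoeff n p) (-1) := by
  have hnum : 0 < 4 * n * (p - 1) * (2 * n - (n - 2) * p) :=
    mul_pos (mul_pos (by positivity) (sub_pos.mpr hp)) (sub_pos.mpr hnp)
  rw [discrim_bakryQuadratic (by positivity)]
  exact div_pos hnum (by positivity)

theorem exists_bakryQuadratic_pos {n p : K} (hn : 0 < n) (hp : 1 < p)
    (hnp : (n - 2) * p < 2 * n) : ∃ α, 0 < bakryQuadratic n p α := by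
  simpa only [bakryQuadratic_eq] using
    exists_quadratic_pos_of_discrim_pos (discrim_bakryQuadratic_pos hn hp hnp)

theorem bakry_discriminant_general {n p : K} (hn : 0 < n) (hp : 1 < p)
    (hnp : (n - 2) * p < 2 * n) :
    (∀ α, bakryQuadratic n p α
      = bakryLeadingCoeff n p * α ^ 2 + bakryLinearCoeff n p * α + -1) ∧
    discrim (bakryLeadingCoeff n p) (bakryLinearCoeff n p) (-1)
      = 4 * n * (p - 1) * (2 * n - (n - 2) * p) / (n + 2) ^ 2 ∧
    0 < discrim (bakryLeadingCoeff n p) (bakryLinearCoeff n p) (-1) ∧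
    ∃ α, 0 < bakryQuadratic n p α :=
  ⟨bakryQuadratic_eq n p, discrim_bakryQuadratic (by positivity) p,
    discrim_bakryQuadratic_pos hn hp hnp, exists_bakryQuadratic_pos hn hp hnp⟩

end LinearOrderedField

/-- The quadratic `Q(α) = (α-1)(1+α(p-2)) + α(p-1)n/(n+2) - α²(p-1)²(n-1)²/(n+2)²`
arising in Bakry's argument has discriminant `4n(p-1)(2n-(n-2)p)/(n+2)²`, which is
positive for `2 < p < 2n/(n-2)`; hence `Q(α) > 0` for some `α`. -/
theorem bakry_discriminant (n : ℕ) (hn : 3 ≤ n) (p : ℝ) (hp2 : 2 < p)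
    (hpn : p < 2 * n / (n - 2))
    (Q : ℝ → ℝ)
    (hQ : Q = fun α => (α - 1) * (1 + α * (p - 2)) + α * (p - 1) * n / (n + 2)
      - α ^ 2 * (p - 1) ^ 2 * ((n : ℝ) - 1) ^ 2 / ((n : ℝ) + 2) ^ 2)
    (a b c : ℝ)
    (ha : a = (p - 2) - (p - 1) ^ 2 * ((n : ℝ) - 1) ^ 2 / ((n : ℝ) + 2) ^ 2)
    (hb : b = (3 - p) + (p - 1) * n / (n + 2))
    (hc : c = -1) :
    (∀ α : ℝ, Q α = a * α ^ 2 + b * α + c) ∧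
    b ^ 2 - 4 * a * c = 4 * n * (p - 1) * (2 * n - ((n : ℝ) - 2) * p) / ((n : ℝ) + 2) ^ 2 ∧
    0 < b ^ 2 - 4 * a * c ∧
    ∃ α : ℝ, 0 < Q α := by
  have hn_two : (2 : ℝ) < n := by exact_mod_cast hn
  subst hQ ha hb hc
  exact bakry_discriminant_general (by linarith) (by linarith)
    ((lt_div_iff₀' (sub_pos.mpr hn_two)).mp hpn)
end
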